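/- arXiv:1701.06451 — 2 statements merged into one kernel-verified Lean document; each statement's English description precedes it below -/
import Mathlib

section
/- Let r ≥ 2 be even and let n ≥ 2 be even. The 3-partite 3-graph H consisting of n/2 pairwise disjoint copies of (r/2)·F, where F is the truncated Fano plane, is r-regular, has n vertices in each vertex class, and satisfies ν(H) = n/2. -/
namespace Tripartite

/-- The degree of a vertex `a` in the first class of a 3-partite 3-multihypergraph,
whose edges are given as a multiset of triples (so parallel edges are allowed). -/
def deg1 {α β γ : Type*} [DecidableEq α] (H : Multiset (α × β × γ)) (a : α) : ℕ :=
  (H.filter fun e => e.1 = a).card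

/-- The degree of a vertex `b` in the second class. -/
def deg2 {α β γ : Type*} [DecidableEq β] (H : Multiset (α × β × γ)) (b : β) : ℕ :=
  (H.filter fun e => e.2.1 = b).card

/-- The degree of a vertex `c` in the third class. -/
def deg3 {α β γ : Type*} [DecidableEq γ] (H : Multiset (α × β × γ)) (c : γ) : ℕ :=
  (H.filter fun e => e.2.2 = c).card

/-- `H` is `r`-regular: every vertex of every class has degree exactly `r`. -/
def IsRegular {α β γ : Type*} [DecidableEq α] [DecidableEq β] [DecidableEq γ]
    (H : Multiset (α × β × γ)) (r : ℕ) : Prop :=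
  (∀ a, deg1 H a = r) ∧ (∀ b, deg2 H b = r) ∧ (∀ c, deg3 H c = r)

/-- A matching of `H`: a set of edges of `H` that are pairwise disjoint. -/
def IsMatching {α β γ : Type*} (H : Multiset (α × β × γ)) (M : Finset (α × β × γ)) : Prop :=
  (∀ e ∈ M, e ∈ H) ∧
  ∀ e ∈ M, ∀ f ∈ M, e ≠ f → e.1 ≠ f.1 ∧ e.2.1 ≠ f.2.1 ∧ e.2.2 ≠ f.2.2

/-- The matching number ν(H): the maximum size of a matching of `H`. -/
noncomputable def matchNum {α β γ : Type*} (H : Multiset (α × β × γ)) : ℕ :=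
  sSup {k | ∃ M : Finset (α × β × γ), IsMatching H M ∧ M.card = k}

/-- The edge multiset of the truncated Fano plane `F` on vertices `x1, y1` (first class),
`x2, y2` (second class), `x3, y3` (third class). -/
def fanoEdges {α β γ : Type*} (x1 y1 : α) (x2 y2 : β) (x3 y3 : γ) :
    Multiset (α × β × γ) :=
  {(x1, x2, x3), (x1, y2, y3), (y1, x2, y3), (y1, y2, x3)}

/-- The six vertices `x1, y1, x2, y2, x3, y3` span a copy of `s • F` in `H`, i.e. a
subhypergraph in which every edge of the truncated Fano plane appears with
multiplicity (at least) `s`. -/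
def IsFanoCopy {α β γ : Type*} (H : Multiset (α × β × γ)) (s : ℕ)
    (x1 y1 : α) (x2 y2 : β) (x3 y3 : γ) : Prop :=
  x1 ≠ y1 ∧ x2 ≠ y2 ∧ x3 ≠ y3 ∧ s • fanoEdges x1 y1 x2 y2 x3 y3 ≤ H

/-- The six vertices `x1, y1, x2, y2, x3, y3` span a connected component of `H` that is a
copy of `s • F`: the multiset of edges of `H` meeting one of these six vertices is exactly
`s` parallel copies of each of the four edges of the truncated Fano plane. -/
def IsFanoComponent {α β γ : Type*} [DecidableEq α] [DecidableEq β] [DecidableEq γ]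
    (H : Multiset (α × β × γ)) (s : ℕ)
    (x1 y1 : α) (x2 y2 : β) (x3 y3 : γ) : Prop :=
  x1 ≠ y1 ∧ x2 ≠ y2 ∧ x3 ≠ y3 ∧
  H.filter (fun e => e.1 = x1 ∨ e.1 = y1 ∨ e.2.1 = x2 ∨ e.2.1 = y2 ∨
      e.2.2 = x3 ∨ e.2.2 = y3)
    = s • fanoEdges x1 y1 x2 y2 x3 y3

/-- The 3-partite 3-graph consisting of `m` pairwise disjoint copies of `s • F`:
each vertex class is `Fin m × Fin 2`, and the `i`-th copy of `s • F` lives on the vertices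
`(i, 0), (i, 1)` of each class. -/
def fanoUnion (m s : ℕ) :
    Multiset ((Fin m × Fin 2) × (Fin m × Fin 2) × (Fin m × Fin 2)) :=
  (Finset.univ : Finset (Fin m)).val.bind fun i =>
    s • fanoEdges (i, 0) (i, 1) (i, 0) (i, 1) (i, 0) (i, 1)

theorem filter_fanoUnion {m : ℕ} (s : ℕ) (i : Fin m)
    (p : (Fin m × Fin 2) × (Fin m × Fin 2) × (Fin m × Fin 2) → Prop) [DecidablePred p]
    (hp : ∀ j, j ≠ i → ∀ a b c, ¬ p ((j, a), (j, b), (j, c))) :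
    (fanoUnion m s).filter p =
      s • (fanoEdges (i, 0) (i, 1) (i, 0) (i, 1) (i, 0) (i, 1)).filter p := by
  have hsum : (fanoUnion m s).filter p = ∑ j : Fin m,
      (s • fanoEdges (j, 0) (j, 1) (j, 0) (j, 1) (j, 0) (j, 1)).filter p := by
    rw [fanoUnion, Multiset.filter_bind]
    rfl
  rw [hsum, Finset.sum_eq_single i _ (by simp), Multiset.filter_nsmul]
  intro j _ hj
  rw [Multiset.filter_nsmul, Multiset.filter_eq_nil.2 _, nsmul_zero]
  intro e he
  simp only [fanoEdges, Multiset.insert_eq_cons, Multiset.mem_cons, Multiset.mem_singleton] at he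
  rcases he with rfl | rfl | rfl | rfl <;> exact hp j hj _ _ _

theorem mem_fanoUnion {m s : ℕ} (hs : s ≠ 0)
    {e : (Fin m × Fin 2) × (Fin m × Fin 2) × (Fin m × Fin 2)} :
    e ∈ fanoUnion m s ↔
      ∃ i, e = ((i, 0), (i, 0), (i, 0)) ∨ e = ((i, 0), (i, 1), (i, 1)) ∨
        e = ((i, 1), (i, 0), (i, 1)) ∨ e = ((i, 1), (i, 1), (i, 0)) := by
  simp [fanoUnion, fanoEdges, Multiset.mem_bind, Multiset.mem_nsmul_of_ne_zero hs]

theorem isRegular_fanoUnion (m s : ℕ) : IsRegular (fanoUnion m s) (s * 2) := by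
  refine ⟨?_, ?_, ?_⟩ <;> rintro ⟨i, a⟩
  all_goals
    simp only [deg1, deg2, deg3]
    rw [filter_fanoUnion s i _ (by simp +contextual), Multiset.card_nsmul]
    congr 1
    fin_cases a <;> simp [fanoEdges, Multiset.filter_singleton]

theorem isFanoComponent_fanoUnion {m : ℕ} (s : ℕ) (i : Fin m) :
    IsFanoComponent (fanoUnion m s) s (i, 0) (i, 1) (i, 0) (i, 1) (i, 0) (i, 1) := by
  refine ⟨by simp, by simp, by simp, ?_⟩
  rw [filter_fanoUnion s i _ (by simp +contextual), Multiset.filter_eq_self.2]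
  simp [fanoEdges]

theorem card_le_of_isMatching_fanoUnion {m s : ℕ} (hs : s ≠ 0)
    {M : Finset ((Fin m × Fin 2) × (Fin m × Fin 2) × (Fin m × Fin 2))}
    (hM : IsMatching (fanoUnion m s) M) : M.card ≤ m := by
  have hinj : Set.InjOn (fun e => e.1.1) (SetLike.coe M) := by
    intro e he f hf hef
    by_contra hne
    have hdisj := hM.2 e he f hf hne
    obtain ⟨i, hi⟩ := (mem_fanoUnion hs).1 (hM.1 e he)
    obtain ⟨j, hj⟩ := (mem_fanoUnion hs).1 (hM.1 f hf)
    rcases hi with rfl | rfl | rfl | rfl <;> rcases hj with rfl | rfl | rfl | rfl <;>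
      simp_all
  simpa using Finset.card_le_card_of_injOn _ (fun e _ => Finset.mem_univ e.1.1) hinj

theorem exists_isMatching_fanoUnion_card_eq {m s : ℕ} (hs : s ≠ 0) :
    ∃ M, IsMatching (fanoUnion m s) M ∧ M.card = m := by
  refine ⟨Finset.univ.image fun i : Fin m => ((i, 0), (i, 0), (i, 0)), ⟨?_, ?_⟩, ?_⟩
  · simp [mem_fanoUnion hs]
  · simp +contextual
  · rw [Finset.card_image_of_injective _ fun i j h => by simpa using h, Finset.card_fin]

theorem matchNum_fanoUnion {m s : ℕ} (hs : s ≠ 0) : matchNum (fanoUnion m s) = m :=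
  IsGreatest.csSup_eq ⟨exists_isMatching_fanoUnion_card_eq hs,
    fun _ ⟨_, hM, hk⟩ => hk ▸ card_le_of_isMatching_fanoUnion hs hM⟩

/-- For even `r ≥ 2` and even `n ≥ 2`, the 3-partite 3-graph consisting of `n/2` pairwise
disjoint copies of `(r/2) • F` is `r`-regular, has `n` vertices in each vertex class, each
of its `n/2` copies of `(r/2) • F` is a connected component, and its matching number is
exactly `n/2`. -/
theorem stmt12 (r n : ℕ) (hr : 2 ≤ r) (hn : 2 ≤ n) (hre : Even r) (hne : Even n) :
    IsRegular (fanoUnion (n / 2) (r / 2)) r ∧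
    Fintype.card (Fin (n / 2) × Fin 2) = n ∧
    (∀ i : Fin (n / 2), IsFanoComponent (fanoUnion (n / 2) (r / 2)) (r / 2)
      (i, 0) (i, 1) (i, 0) (i, 1) (i, 0) (i, 1)) ∧
    matchNum (fanoUnion (n / 2) (r / 2)) = n / 2 := by
  have hr2 : r / 2 * 2 = r := Nat.div_mul_cancel hre.two_dvd
  refine ⟨?_, ?_, isFanoComponent_fanoUnion _, matchNum_fanoUnion (by omega)⟩
  · simpa only [hr2] using isRegular_fanoUnion (n / 2) (r / 2)
  · simpa using Nat.div_mul_cancel hne.two_dvd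

end Tripartite
end

section
/- Let r ≥ 2 and let H be an r-regular 3-partite 3-graph with n vertices in each vertex class, and let ε ≥ 0. If ν(H) ≤ (1 + ε)·n/2, then H contains at least (1 − (30r − 35)ε)·n/2 connected components that are copies of (r/2)·F, where F is the truncated Fano plane. -/
namespace Tripartite

/-- Two triples are disjoint if they differ in every coordinate. -/
def Disj {V : Type*} (e f : Fin 3 → V) : Prop := ∀ i, e i ≠ f i

/-- The four edges of the truncated Fano plane with classes `{p.1 i, p.2 i}`. -/
def fano {V : Type*} [DecidableEq V] (p : (Fin 3 → V) × (Fin 3 → V)) : Finset (Fin 3 → V) :=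
  {p.1, ![p.1 0, p.2 1, p.2 2], ![p.2 0, p.1 1, p.2 2], ![p.2 0, p.2 1, p.1 2]}

/-- The vertex `v` of class `i` belongs to the six-vertex set of `p`. -/
def On {V : Type*} (p : (Fin 3 → V) × (Fin 3 → V)) (i : Fin 3) (v : V) : Prop :=
  v = p.1 i ∨ v = p.2 i

/-- A matching `M` together with a family `B` of truncated Fano planes, all vertex-disjoint,
in the hypergraph with edge multiplicities `w`. -/
structure Config {V : Type*} [DecidableEq V] (w : (Fin 3 → V) → ℕ)
    (M : Finset (Fin 3 → V)) (B : Finset ((Fin 3 → V) × (Fin 3 → V))) : Prop where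
  edge : ∀ m ∈ M, w m ≠ 0
  disj : ∀ m ∈ M, ∀ m' ∈ M, m ≠ m' → Disj m m'
  edgeB : ∀ p ∈ B, ∀ g ∈ fano p, w g ≠ 0
  ne : ∀ p ∈ B, Disj p.1 p.2
  sep : ∀ p ∈ B, ∀ m ∈ M, ∀ i, ¬ On p i (m i)
  sepB : ∀ p ∈ B, ∀ q ∈ B, ∀ i v, On p i v → On q i v → p = q

/-- No matching in the hypergraph with edge multiplicities `w` has more than `ν` edges. -/
def MatchBound {V : Type*} (w : (Fin 3 → V) → ℕ) (ν : ℕ) : Prop :=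
  ∀ M : Finset (Fin 3 → V), (∀ e ∈ M, w e ≠ 0) →
    (∀ e ∈ M, ∀ f ∈ M, e ≠ f → Disj e f) → M.card ≤ ν

section
lemma Disj.symm {V : Type*} {e f : Fin 3 → V} (h : Disj e f) : Disj f e := fun i => (h i).symm

variable {V : Type*} [DecidableEq V]

lemma on_of_mem_fano {p : (Fin 3 → V) × (Fin 3 → V)} {g : Fin 3 → V} (hg : g ∈ fano p)
    (i : Fin 3) : On p i (g i) := by
  simp only [fano, Finset.mem_insert, Finset.mem_singleton] at hg
  rcases hg with rfl | rfl | rfl | rfl <;> fin_cases i <;> simp [On]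

lemma exists_fano_disj {p : (Fin 3 → V) × (Fin 3 → V)} (hp : Disj p.1 p.2) {x : Fin 3 → V}
    (hx : x ∉ fano p) : ∃ g ∈ fano p, Disj g x := by
  have h0 := hp 0
  have h1 := hp 1
  have h2 := hp 2
  simp only [fano, Finset.mem_insert, Finset.mem_singleton, funext_iff, Fin.forall_fin_succ] at hx
  simp only [fano, Finset.exists_mem_insert, Finset.mem_singleton, exists_eq_left, Disj,
    Fin.forall_fin_succ]
  simp at hx h0 h1 h2 ⊢
  grind

/-- Two triples that together meet `p` in at most two vertices, of different classes, can be
avoided by an edge of the truncated Fano plane `p`. -/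
lemma exists_fano_disj_pair {p : (Fin 3 → V) × (Fin 3 → V)} (hp : Disj p.1 p.2)
    {e f : Fin 3 → V} (hef : ∀ i, On p i (e i) → ¬ On p i (f i))
    (t : Fin 3) (ht : ∀ i, On p i (e i) ∨ On p i (f i) → i ≠ t) :
    ∃ g ∈ fano p, Disj g e ∧ Disj g f := by
  classical
  obtain ⟨g, hg, hgx⟩ := exists_fano_disj hp
    (x := fun i => if On p i (e i) then e i else f i) (fun hx => by
      have := on_of_mem_fano hx t
      by_cases h : On p t (e t)
      · exact ht t (Or.inl h) rfl
      · exact ht t (Or.inr (by simpa [h] using this)) rfl)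
  refine ⟨g, hg, fun i hi => ?_, fun i hi => ?_⟩
  · have := hgx i
    have h := on_of_mem_fano hg i
    rw [hi] at h
    simp [h, hi] at this
  · have := hgx i
    have h := on_of_mem_fano hg i
    rw [hi] at h
    have h' : ¬ On p i (e i) := fun h' => hef i h' h
    simp [h', hi] at this

variable {w : (Fin 3 → V) → ℕ} {M : Finset (Fin 3 → V)}
  {B : Finset ((Fin 3 → V) × (Fin 3 → V))} {ν : ℕ}

lemma Config.card_le (hc : Config w M B) (hν : MatchBound w ν) {M' Z : Finset (Fin 3 → V)}
    (hM' : M' ⊆ M) (hZ : ∀ z ∈ Z, w z ≠ 0) (hZZ : ∀ e ∈ Z, ∀ f ∈ Z, e ≠ f → Disj e f)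
    (hZM : ∀ z ∈ Z, ∀ m ∈ M', Disj z m)
    (hZB : ∀ p ∈ B, ∃ g ∈ fano p, ∀ z ∈ Z, Disj g z) :
    M'.card + Z.card + B.card ≤ ν := by
  have hex : ∀ p, ∃ g, p ∈ B → g ∈ fano p ∧ ∀ z ∈ Z, Disj g z := fun p => by
    by_cases hp : p ∈ B
    · obtain ⟨g, hg⟩ := hZB p hp
      exact ⟨g, fun _ => hg⟩
    · exact ⟨p.1, fun h => absurd h hp⟩
  choose g hg' using hex
  have hg : ∀ p ∈ B, g p ∈ fano p := fun p hp => (hg' p hp).1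
  have hgZ : ∀ p ∈ B, ∀ z ∈ Z, Disj (g p) z := fun p hp => (hg' p hp).2
  have irr : ∀ e : Fin 3 → V, ¬ Disj e e := fun e h => h 0 rfl
  have hgM : ∀ p ∈ B, ∀ m ∈ M', Disj (g p) m := fun p hp m hm i h =>
    hc.sep p hp m (hM' hm) i (h ▸ on_of_mem_fano (hg p hp) i)
  have hgg : ∀ p ∈ B, ∀ q ∈ B, p ≠ q → Disj (g p) (g q) := fun p hp q hq hpq i h =>
    hpq (hc.sepB p hp q hq i _ (on_of_mem_fano (hg p hp) i)
      (h ▸ on_of_mem_fano (hg q hq) i))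
  have hinj : Set.InjOn g B := fun p hp q hq h => by
    by_contra hpq
    exact irr _ (h ▸ hgg p hp q hq hpq)
  have h1 : Disjoint M' Z := Finset.disjoint_left.2 fun e he he' => irr e (hZM e he' e he)
  have h2 : Disjoint (M' ∪ Z) (B.image g) := by
    refine Finset.disjoint_left.2 fun e he he' => ?_
    obtain ⟨p, hp, rfl⟩ := Finset.mem_image.1 he'
    rcases Finset.mem_union.1 he with h | h
    · exact irr _ (hgM p hp _ h)
    · exact irr _ (hgZ p hp _ h)
  have := hν ((M' ∪ Z) ∪ B.image g) ?_ ?_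
  · rwa [Finset.card_union_of_disjoint h2, Finset.card_union_of_disjoint h1,
      Finset.card_image_of_injOn hinj] at this
  · intro e he
    simp only [Finset.mem_union, Finset.mem_image] at he
    rcases he with (h | h) | ⟨p, hp, rfl⟩
    · exact hc.edge e (hM' h)
    · exact hZ e h
    · exact hc.edgeB p hp _ (hg p hp)
  · intro e he f hf hef
    simp only [Finset.mem_union, Finset.mem_image] at he hf
    rcases he with (h | h) | ⟨p, hp, rfl⟩ <;> rcases hf with (h' | h') | ⟨q, hq, rfl⟩
    · exact hc.disj e (hM' h) f (hM' h') hef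
    · exact (hZM f h' e h).symm
    · exact (hgM q hq e h).symm
    · exact hZM e h f h'
    · exact hZZ e h f h' hef
    · exact (hgZ q hq e h).symm
    · exact hgM p hp f h'
    · exact hgZ p hp f h'
    · exact hgg p hp q hq (fun h => hef (h ▸ rfl))

/-- Every edge avoiding the matching `M` is an edge of one of the Fano planes of a maximum
configuration. -/
lemma Config.mem_fano_of_avoid (hc : Config w M B) (hν : MatchBound w ν)
    (hcard : M.card + B.card = ν) {e : Fin 3 → V} (he : w e ≠ 0)
    (heM : ∀ m ∈ M, Disj e m) : ∃ p ∈ B, e ∈ fano p := by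
  by_contra! h
  have := hc.card_le hν (M' := M) (Z := {e}) subset_rfl (by simpa) (by simp) (by simpa)
    (fun p hp => by simpa using exists_fano_disj (hc.ne p hp) (h p hp))
  simp at this
  omega

/-- The classes in which `e` meets the matching `M`. -/
def hitM (M : Finset (Fin 3 → V)) (e : Fin 3 → V) : Finset (Fin 3) :=
  {i | ∃ m ∈ M, e i = m i}

open Classical in
/-- The classes in which `e` meets one of the Fano planes in `B`. -/
noncomputable def hitB (B : Finset ((Fin 3 → V) × (Fin 3 → V))) (e : Fin 3 → V) :
    Finset (Fin 3) :=
  {i | ∃ p ∈ B, On p i (e i)}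

/-- The edge `e` meets `M` only in the vertex of class `i` of `m`, and it meets the Fano planes
in `B` in at most one vertex. -/
structure Private (w : (Fin 3 → V) → ℕ) (M : Finset (Fin 3 → V))
    (B : Finset ((Fin 3 → V) × (Fin 3 → V))) (m : Fin 3 → V) (i : Fin 3)
    (e : Fin 3 → V) : Prop where
  edge : w e ≠ 0
  eq : e i = m i
  uniq : ∀ m' ∈ M, ∀ l, e l = m' l → l = i
  hit : ∀ p ∈ B, ∀ q ∈ B, ∀ l t, On p l (e l) → On q t (e t) → l = t

/-- Two private edges at different vertices of `m` agree in the third class, up to exchanging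
two vertices of the same Fano plane. -/
lemma Config.private_pair (hc : Config w M B) (hν : MatchBound w ν)
    (hcard : M.card + B.card = ν) {m : Fin 3 → V} (hm : m ∈ M) {i i' l : Fin 3}
    (hii : i ≠ i') (hil : i ≠ l) (hil' : i' ≠ l) {e f : Fin 3 → V}
    (he : Private w M B m i e) (hf : Private w M B m i' f) :
    e l = f l ∨ ∃ p ∈ B, On p l (e l) ∧ On p l (f l) := by
  by_contra! h
  obtain ⟨hne, hno⟩ := h
  have cover : ∀ t : Fin 3, t = i ∨ t = i' ∨ t = l := by omega
  have hd : Disj e f := by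
    intro t ht
    rcases cover t with rfl | rfl | rfl
    · exact hii (hf.uniq m hm t (ht ▸ he.eq))
    · exact hii (he.uniq m hm t (ht ▸ hf.eq)).symm
    · exact hne ht
  have hef : e ≠ f := fun h => hne (h ▸ rfl)
  have hZM : ∀ j g, Private w M B m j g → ∀ m' ∈ M.erase m, Disj g m' := by
    intro j g hg m' hm' t ht
    obtain ⟨h1, h2⟩ := Finset.mem_erase.1 hm'
    obtain rfl := hg.uniq m' h2 t ht
    exact hc.disj m' h2 m hm h1 t (ht ▸ hg.eq)
  have key := hc.card_le hν (M' := M.erase m) (Z := {e, f}) (Finset.erase_subset _ _)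
    (by simp [he.edge, hf.edge])
    (by
      intro a ha b hb hab
      simp only [Finset.mem_insert, Finset.mem_singleton] at ha hb
      rcases ha with rfl | rfl <;> rcases hb with rfl | rfl
      · exact absurd rfl hab
      · exact hd
      · exact hd.symm
      · exact absurd rfl hab)
    (by
      intro z hz
      simp only [Finset.mem_insert, Finset.mem_singleton] at hz
      rcases hz with rfl | rfl
      · exact hZM i _ he
      · exact hZM i' _ hf)
    (by
      intro p hp
      have hei : ¬ On p i (e i) := by rw [he.eq]; exact hc.sep p hp m hm i
      have hfi : ¬ On p i' (f i') := by rw [hf.eq]; exact hc.sep p hp m hm i'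
      have hpair : ∀ t, On p t (e t) → ¬ On p t (f t) := by
        intro t h1 h2
        rcases cover t with rfl | rfl | rfl
        · exact hei h1
        · exact hfi h2
        · exact hno p hp h1 h2
      obtain ⟨t, ht⟩ : ∃ t, ∀ j, On p j (e j) ∨ On p j (f j) → j ≠ t := by
        by_contra! hall
        obtain ⟨j, hj, rfl⟩ := hall i
        obtain ⟨j', hj', rfl⟩ := hall i'
        obtain ⟨k, hk, rfl⟩ := hall l
        have h1 := hj.resolve_left hei
        have h2 := hj'.resolve_right hfi
        rcases hk with h3 | h3
        · exact hil' (he.hit p hp p hp _ _ h2 h3)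
        · exact hil (hf.hit p hp p hp _ _ h1 h3)
      obtain ⟨g, hg, h1, h2⟩ := exists_fano_disj_pair (hc.ne p hp) hpair t ht
      exact ⟨g, hg, by simp [h1, h2]⟩)
  rw [Finset.card_pair hef, Finset.card_erase_of_mem hm] at key
  have := Finset.card_pos.2 ⟨m, hm⟩
  omega

/-- Private edges at all three vertices of `m` that close up to a Fano plane outside `B` enlarge
the family `B`. -/
lemma Config.extend (hc : Config w M B) {m : Fin 3 → V} (hm : m ∈ M) {e : Fin 3 → Fin 3 → V}
    (he : ∀ i, Private w M B m i (e i)) (h0 : e 1 0 = e 2 0) (h1 : e 0 1 = e 2 1)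
    (h2 : e 0 2 = e 1 2) (hB : ∀ i l, i ≠ l → ∀ p ∈ B, ¬ On p l (e i l)) :
    ∃ p, p ∉ B ∧ Config w (M.erase m) (insert p B) := by
  have hoM : ∀ i l, i ≠ l → ∀ m' ∈ M, e i l ≠ m' l := fun i l hil m' hm' h =>
    hil ((he i).uniq m' hm' l h).symm
  set p : (Fin 3 → V) × (Fin 3 → V) := (m, ![e 1 0, e 0 1, e 0 2]) with hp
  have ho : ∀ l, ∃ i, i ≠ l ∧ p.2 l = e i l := by
    intro l
    fin_cases l
    · exact ⟨1, by decide, rfl⟩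
    · exact ⟨0, by decide, rfl⟩
    · exact ⟨0, by decide, rfl⟩
  have hsep : ∀ q ∈ B, ∀ i v, On p i v → ¬ On q i v := by
    rintro q hq i v (rfl | rfl)
    · exact hc.sep q hq m hm i
    · obtain ⟨t, ht, h⟩ := ho i
      rw [h]
      exact hB t i ht q hq
  refine ⟨p, fun h => hsep p h 0 (p.1 0) (Or.inl rfl) (Or.inl rfl), ?_⟩
  have hf : fano p = {m, e 0, e 1, e 2} := by
    have t0 : ![p.1 0, p.2 1, p.2 2] = e 0 := by
      funext i; fin_cases i <;> simp [hp, (he 0).eq]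
    have t1 : ![p.2 0, p.1 1, p.2 2] = e 1 := by
      funext i; fin_cases i <;> simp [hp, (he 1).eq, h2]
    have t2 : ![p.2 0, p.2 1, p.1 2] = e 2 := by
      funext i; fin_cases i <;> simp [hp, (he 2).eq, h0, h1]
    rw [fano, t0, t1, t2]
  constructor
  · exact fun a ha => hc.edge a (Finset.mem_of_mem_erase ha)
  · exact fun a ha b hb => hc.disj a (Finset.mem_of_mem_erase ha) b (Finset.mem_of_mem_erase hb)
  · intro q hq g hg
    rcases Finset.mem_insert.1 hq with rfl | hq
    · rw [hf] at hg
      simp only [Finset.mem_insert, Finset.mem_singleton] at hg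
      rcases hg with rfl | rfl | rfl | rfl
      · exact hc.edge _ hm
      · exact (he 0).edge
      · exact (he 1).edge
      · exact (he 2).edge
    · exact hc.edgeB q hq g hg
  · intro q hq
    rcases Finset.mem_insert.1 hq with rfl | hq
    · intro l h
      obtain ⟨t, ht, h'⟩ := ho l
      exact hoM t l ht m hm (h' ▸ h.symm)
    · exact hc.ne q hq
  · intro q hq a ha i
    obtain ⟨h3, h4⟩ := Finset.mem_erase.1 ha
    rcases Finset.mem_insert.1 hq with rfl | hq
    · rintro (h | h)
      · exact hc.disj a h4 m hm h3 i h
      · obtain ⟨t, ht, h'⟩ := ho i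
        exact hoM t i ht a h4 (h' ▸ h.symm)
    · exact hc.sep q hq a h4 i
  · intro q hq t ht i v h3 h4
    rcases Finset.mem_insert.1 hq with rfl | hq <;> rcases Finset.mem_insert.1 ht with rfl | ht
    · rfl
    · exact absurd h4 (hsep t ht i v h3)
    · exact absurd h3 (hsep q hq i v h4)
    · exact hc.sepB q hq t ht i v h3 h4

/-- The excess charge of private edges is controlled by the degrees of two vertices. -/
lemma Config.exists_cover (hc : Config w M B) (hν : MatchBound w ν)
    (hcard : M.card + B.card = ν)
    (hmax : ∀ M' B', Config w M' B' → M'.card + B'.card = ν → B'.card ≤ B.card)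
    {m : Fin 3 → V} (hm : m ∈ M) :
    ∃ l z l' z', ∀ i e, Private w M B m i e →
      2 - (hitB B e).card ≤ (if e l = z then 1 else 0) + (if e l' = z' then 1 else 0) := by
  have hbon : ∀ p ∈ B, ∀ l e, On p l (e l) → 2 - (hitB B e).card ≤ 1 := by
    intro p hp l e h
    have : 0 < (hitB B e).card := Finset.card_pos.2 ⟨l, by
      simp only [hitB, Finset.mem_filter, Finset.mem_univ, true_and]
      exact ⟨p, hp, h⟩⟩
    omega
  have pair := fun {i i' l : Fin 3} (hii : i ≠ i') (hil : i ≠ l) (hil' : i' ≠ l)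
    {e f : Fin 3 → V} => hc.private_pair hν hcard hm hii hil hil' (e := e) (f := f)
  by_cases hA : ∃ i i' l, i ≠ i' ∧ i ≠ l ∧ i' ≠ l ∧ ∃ e f, Private w M B m i e ∧
      Private w M B m i' f ∧ ∃ p ∈ B, On p l (e l)
  · obtain ⟨i, i', l, hii, hil, hil', e, f, he, hf, p, hp, hpe⟩ := hA
    have cover : ∀ t : Fin 3, t = i ∨ t = i' ∨ t = l := by omega
    have tr : ∀ v, On p l v → ∀ u, (v = u ∨ ∃ q ∈ B, On q l v ∧ On q l u) → On p l u := by
      rintro v hv u (rfl | ⟨q, hq, h1, h2⟩)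
      · exact hv
      · exact hc.sepB p hp q hq l v hv h1 ▸ h2
    have hpf : On p l (f l) := tr _ hpe _ (pair hii hil hil' he hf)
    have hQi : ∀ e', Private w M B m i e' → On p l (e' l) := fun e' he' =>
      tr _ hpf _ (pair hii.symm hil' hil hf he')
    have hQi' : ∀ e', Private w M B m i' e' → On p l (e' l) := fun e' he' =>
      tr _ hpe _ (pair hii hil hil' he he')
    by_cases hl : ∃ g, Private w M B m l g
    · obtain ⟨g, hg⟩ := hl
      have no : ∀ j e', j ≠ l → Private w M B m j e' → On p l (e' l) → ∀ t, t ≠ l →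
          ∀ q ∈ B, ¬ On q t (e' t) := fun j e' _ he' h t ht q hq h' =>
        ht (he'.hit q hq p hp t l h' h)
      have hgi : ∀ g', Private w M B m l g' → g' i = f i := fun g' hg' => by
        rcases pair hil'.symm hil.symm hii.symm hg' hf with h | ⟨q, hq, -, h⟩
        · exact h
        · exact absurd h (no i' f hil' hf hpf i hil q hq)
      have hgi' : ∀ g', Private w M B m l g' → g' i' = e i' := fun g' hg' => by
        rcases pair hil.symm hil'.symm hii hg' he with h | ⟨q, hq, -, h⟩
        · exact h
        · exact absurd h (no i e hil he hpe i' hil' q hq)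
      refine ⟨i, f i, i', e i', fun j e' he' => ?_⟩
      rcases cover j with rfl | rfl | rfl
      · have h1 := hbon p hp l e' (hQi e' he')
        have h2 : e' i' = e i' := by
          rcases pair hil hii hil'.symm he' hg with h | ⟨q, hq, h, -⟩
          · rw [h, hgi' g hg]
          · exact absurd h (no _ e' hil he' (hQi e' he') i' hil' q hq)
        simp only [h2, if_true]
        omega
      · have h1 := hbon p hp l e' (hQi' e' he')
        have h2 : e' i = f i := by
          rcases pair hil' hii.symm hil.symm he' hg with h | ⟨q, hq, h, -⟩
          · rw [h, hgi g hg]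
          · exact absurd h (no _ e' hil' he' (hQi' e' he') i hil q hq)
        simp only [h2, if_true]
        omega
      · simp only [hgi e' he', hgi' e' he', if_true]
        omega
    · refine ⟨l, p.1 l, l, p.2 l, fun j e' he' => ?_⟩
      have h : On p l (e' l) := by
        rcases cover j with rfl | rfl | rfl
        · exact hQi e' he'
        · exact hQi' e' he'
        · exact absurd ⟨e', he'⟩ hl
      have h1 := hbon p hp l e' h
      rcases h with h | h <;> simp only [h, if_true] <;> omega
  · have hne : ∀ {i i' l : Fin 3}, i ≠ i' → i ≠ l → i' ≠ l → ∀ {e f},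
        Private w M B m i e → Private w M B m i' f → ∀ p ∈ B, ¬ On p l (e l) :=
      fun {i i' l} h1 h2 h3 {e f} he hf p hp h =>
        hA ⟨i, i', l, h1, h2, h3, e, f, he, hf, p, hp, h⟩
    have heq : ∀ {i i' l : Fin 3}, i ≠ i' → i ≠ l → i' ≠ l → ∀ {e f},
        Private w M B m i e → Private w M B m i' f → e l = f l := by
      intro i i' l h1 h2 h3 e f he hf
      rcases pair h1 h2 h3 he hf with h | ⟨p, hp, h, -⟩
      · exact h
      · exact absurd h (hne h1 h2 h3 he hf p hp)
    by_cases h3 : ∀ l, ∃ e, Private w M B m l e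
    · exfalso
      choose e he using h3
      obtain ⟨p, hpB, hc'⟩ := hc.extend hm he
        (heq (by decide) (by decide) (by decide) (he 1) (he 2))
        (heq (by decide) (by decide) (by decide) (he 0) (he 2))
        (heq (by decide) (by decide) (by decide) (he 0) (he 1))
        (fun i l hil => by
          obtain ⟨t, h1, h2⟩ : ∃ t : Fin 3, i ≠ t ∧ t ≠ l := by
            revert i l; decide
          exact hne h1 hil h2 (he i) (he t))
      have h4 := Finset.card_erase_add_one hm
      have h5 := hmax _ _ hc' (by rw [Finset.card_insert_of_notMem hpB]; omega)
      rw [Finset.card_insert_of_notMem hpB] at h5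
      omega
    · push Not at h3
      obtain ⟨l, hl⟩ := h3
      obtain ⟨i, i', hii, hil, hil'⟩ : ∃ i i' : Fin 3, i ≠ i' ∧ i ≠ l ∧ i' ≠ l := by
        clear hl; revert l; decide
      have cover : ∀ t : Fin 3, t = i ∨ t = i' ∨ t = l := by omega
      by_cases hi : ∃ e, Private w M B m i e
      · obtain ⟨e, he⟩ := hi
        by_cases hi' : ∃ f, Private w M B m i' f
        · obtain ⟨f, hf⟩ := hi'
          refine ⟨l, e l, l, e l, fun j e' he' => ?_⟩
          have : e' l = e l := by
            rcases cover j with rfl | rfl | rfl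
            · rw [heq hii hil hil' he' hf, heq hii hil hil' he hf]
            · exact heq hii.symm hil' hil he' he
            · exact absurd he' (hl e')
          simp only [this, if_true]
          omega
        · refine ⟨i, m i, i, m i, fun j e' he' => ?_⟩
          rcases cover j with rfl | rfl | rfl
          · simp only [he'.eq, if_true]
            omega
          · exact absurd ⟨e', he'⟩ hi'
          · exact absurd he' (hl e')
      · refine ⟨i', m i', i', m i', fun j f hf => ?_⟩
        rcases cover j with rfl | rfl | rfl
        · exact absurd ⟨f, hf⟩ hi
        · simp only [hf.eq, if_true]
          omega
        · exact absurd hf (hl f)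

/-- The extra charge that an edge `e` meeting `M` in one vertex only, a vertex of `m`, puts on
`m`. -/
noncomputable def bonus (M : Finset (Fin 3 → V)) (B : Finset ((Fin 3 → V) × (Fin 3 → V)))
    (m e : Fin 3 → V) : ℕ :=
  if (hitM M e).card = 1 ∧ ∃ i, e i = m i then 2 - (hitB B e).card else 0

lemma mem_hitM {e : Fin 3 → V} {i : Fin 3} : i ∈ hitM M e ↔ ∃ m ∈ M, e i = m i := by
  simp [hitM]

lemma mem_hitB {V : Type*} {B : Finset ((Fin 3 → V) × (Fin 3 → V))} {e : Fin 3 → V}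
    {i : Fin 3} : i ∈ hitB B e ↔ ∃ p ∈ B, On p i (e i) := by
  simp [hitB]

lemma private_of_bonus_ne_zero {m e : Fin 3 → V} (hm : m ∈ M) (he : w e ≠ 0)
    (hb : bonus M B m e ≠ 0) : ∃ i, Private w M B m i e := by
  unfold bonus at hb
  split_ifs at hb with h
  · obtain ⟨h1, i, hi⟩ := h
    have h1' := Finset.card_le_one.1 h1.le
    have h2 := Finset.card_le_one.1 (show (hitB B e).card ≤ 1 by omega)
    refine ⟨i, he, hi, fun m' hm' l hl => h1' _ (mem_hitM.2 ⟨m', hm', hl⟩) _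
      (mem_hitM.2 ⟨m, hm, hi⟩), fun p hp q hq l l' hl hl' =>
        h2 _ (mem_hitB.2 ⟨p, hp, hl⟩) _ (mem_hitB.2 ⟨q, hq, hl'⟩)⟩
  · exact absurd rfl hb

lemma card_hitM_le (e : Fin 3 → V) :
    (hitM M e).card ≤ ∑ m ∈ M, ∑ i, if e i = m i then 1 else 0 := by
  rw [Finset.sum_comm, hitM, Finset.card_filter]
  refine Finset.sum_le_sum fun i _ => ?_
  split_ifs with h
  · obtain ⟨m, hm, h⟩ := h
    refine le_trans ?_ (Finset.single_le_sum (fun _ _ => Nat.zero_le _) hm)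
    simp [h]
  · exact Nat.zero_le _

lemma card_hitB_le (e : Fin 3 → V) :
    (hitB B e).card ≤
      ∑ p ∈ B, ∑ i, ((if e i = p.1 i then 1 else 0) + (if e i = p.2 i then 1 else 0)) := by
  rw [Finset.sum_comm, hitB, Finset.card_filter]
  refine Finset.sum_le_sum fun i _ => ?_
  split_ifs with h
  · obtain ⟨p, hp, h⟩ := h
    refine le_trans ?_ (Finset.single_le_sum (fun _ _ => Nat.zero_le _) hp)
    rcases h with h | h <;> simp [h]
  · exact Nat.zero_le _

/-- Every edge distributes a total charge of at least `4`, copies of edges of `M` at least `6`. -/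
lemma Config.charge (hc : Config w M B) (hν : MatchBound w ν)
    (hcard : M.card + B.card = ν) {e : Fin 3 → V} (he : w e ≠ 0) :
    4 + 2 * (∑ m ∈ M, if e = m then 1 else 0) ≤
      2 * (∑ m ∈ M, ∑ i, if e i = m i then 1 else 0) + ∑ m ∈ M, bonus M B m e +
      (∑ p ∈ B, ∑ i, ((if e i = p.1 i then 1 else 0) + (if e i = p.2 i then 1 else 0))) +
      ∑ p ∈ B, if e ∈ fano p then 1 else 0 := by
  have h1 := card_hitM_le (M := M) e
  have h2 := card_hitB_le (B := B) e
  rw [Finset.sum_ite_eq]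
  by_cases heM : e ∈ M
  · have : hitM M e = Finset.univ := by
      ext i
      simp only [mem_hitM, Finset.mem_univ, iff_true]
      exact ⟨e, heM, rfl⟩
    rw [this, Finset.card_fin] at h1
    simp only [heM, if_true]
    omega
  simp only [heM, if_false]
  by_cases h0 : (hitM M e).card = 0
  · obtain ⟨p, hp, hep⟩ := hc.mem_fano_of_avoid hν hcard he (fun m hm i hi => by
      have : i ∈ hitM M e := mem_hitM.2 ⟨m, hm, hi⟩
      simp [Finset.card_eq_zero.1 h0] at this)
    have h3 : hitB B e = Finset.univ := by
      ext i
      simp only [mem_hitB, Finset.mem_univ, iff_true]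
      exact ⟨p, hp, on_of_mem_fano hep i⟩
    have h4 : 1 ≤ ∑ p ∈ B, if e ∈ fano p then 1 else 0 := by
      refine le_trans ?_ (Finset.single_le_sum (fun _ _ => Nat.zero_le _) hp)
      simp [hep]
    rw [h3, Finset.card_fin] at h2
    omega
  by_cases h3 : (hitM M e).card = 1
  · obtain ⟨i, hi⟩ := Finset.card_pos.1 (Nat.pos_of_ne_zero h0)
    obtain ⟨m, hm, hi⟩ := mem_hitM.1 hi
    have h4 : 2 - (hitB B e).card ≤ ∑ m ∈ M, bonus M B m e := by
      refine le_trans ?_ (Finset.single_le_sum (fun _ _ => Nat.zero_le _) hm)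
      rw [bonus, if_pos ⟨h3, i, hi⟩]
    omega
  · omega

variable [Fintype V] {r : ℕ}

/-- In the hypergraph with edge multiplicities `w` every vertex has degree `r`. -/
def Reg (w : (Fin 3 → V) → ℕ) (r : ℕ) : Prop :=
  ∀ i v, ∑ e, w e * (if e i = v then 1 else 0) = r

lemma Config.sum_bonus_le (hc : Config w M B) (hν : MatchBound w ν) (hr : Reg w r)
    (hcard : M.card + B.card = ν)
    (hmax : ∀ M' B', Config w M' B' → M'.card + B'.card = ν → B'.card ≤ B.card)
    {m : Fin 3 → V} (hm : m ∈ M) : ∑ e, w e * bonus M B m e ≤ 2 * r := by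
  obtain ⟨l, z, l', z', h⟩ := hc.exists_cover hν hcard hmax hm
  calc ∑ e, w e * bonus M B m e
      ≤ ∑ e, (w e * (if e l = z then 1 else 0) + w e * (if e l' = z' then 1 else 0)) := by
        refine Finset.sum_le_sum fun e _ => ?_
        rw [← mul_add]
        by_cases he : w e = 0
        · simp [he]
        refine Nat.mul_le_mul_left _ ?_
        by_cases hb : bonus M B m e = 0
        · simp [hb]
        obtain ⟨i, hi⟩ := private_of_bonus_ne_zero hm he hb
        refine le_trans ?_ (h i e hi)
        unfold bonus
        split_ifs <;> omega
    _ = 2 * r := by rw [Finset.sum_add_distrib, hr, hr, two_mul]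

lemma Reg.sum_eq (hr : Reg w r) : ∑ e, w e = Fintype.card V * r := by
  have : ∑ v : V, ∑ e, w e * (if e 0 = v then 1 else 0) = Fintype.card V * r := by
    simp only [hr 0 _]
    simp
  rw [Finset.sum_comm] at this
  simpa using this

lemma Config.main_count (hc : Config w M B) (hν : MatchBound w ν) (hr : Reg w r)
    (hcard : M.card + B.card = ν)
    (hmax : ∀ M' B', Config w M' B' → M'.card + B'.card = ν → B'.card ≤ B.card) :
    4 * (Fintype.card V * r) + 2 * M.card ≤
      8 * r * M.card + 6 * r * B.card + ∑ p ∈ B, ∑ e ∈ fano p, w e := by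
  have key : ∑ e, w e * (4 + 2 * (∑ m ∈ M, if e = m then 1 else 0)) ≤ ∑ e, w e * _ :=
    Finset.sum_le_sum fun e _ => by
      by_cases he : w e = 0
      · simp [he]
      · exact Nat.mul_le_mul_left _ (hc.charge hν hcard he)
  have e1 : ∑ e, w e * (4 + 2 * (∑ m ∈ M, if e = m then 1 else 0)) =
      4 * (Fintype.card V * r) + 2 * ∑ m ∈ M, w m := by
    simp only [mul_add, Finset.sum_add_distrib, ← hr.sum_eq, Finset.mul_sum]
    congr 1
    · exact Finset.sum_congr rfl fun _ _ => mul_comm _ _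
    · rw [Finset.sum_comm]
      refine Finset.sum_congr rfl fun m _ => ?_
      simp [mul_comm]
  have e2 : ∑ e, w e * (2 * (∑ m ∈ M, ∑ i, if e i = m i then 1 else 0)) = 6 * r * M.card := by
    have : ∑ m ∈ M, ∑ i, ∑ e, w e * (if e i = m i then 1 else 0) = M.card * (3 * r) := by
      simp only [hr _ _]
      simp
    rw [show 6 * r * M.card = 2 * (M.card * (3 * r)) by ring, ← this]
    simp only [Finset.mul_sum]
    rw [Finset.sum_comm]
    refine Finset.sum_congr rfl fun m _ => ?_
    rw [Finset.sum_comm]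
    refine Finset.sum_congr rfl fun i _ => Finset.sum_congr rfl fun e _ => by ring
  have e3 : ∑ e, w e * (∑ m ∈ M, bonus M B m e) ≤ 2 * r * M.card := by
    simp only [Finset.mul_sum]
    rw [Finset.sum_comm, mul_comm, ← smul_eq_mul]
    exact Finset.sum_le_card_nsmul _ _ _ fun m hm => hc.sum_bonus_le hν hr hcard hmax hm
  have e4 : ∑ e, w e * (∑ p ∈ B, ∑ i,
      ((if e i = p.1 i then 1 else 0) + (if e i = p.2 i then 1 else 0))) = 6 * r * B.card := by
    have : ∑ p ∈ B, ∑ i, (∑ e, w e * (if e i = p.1 i then 1 else 0) +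
        ∑ e, w e * (if e i = p.2 i then 1 else 0)) = B.card * (3 * (r + r)) := by
      simp only [hr _ _]
      simp
    rw [show 6 * r * B.card = B.card * (3 * (r + r)) by ring, ← this]
    simp only [Finset.mul_sum, mul_add, ← Finset.sum_add_distrib]
    rw [Finset.sum_comm]
    refine Finset.sum_congr rfl fun m _ => ?_
    rw [Finset.sum_comm]
  have e5 : ∑ e, w e * (∑ p ∈ B, if e ∈ fano p then 1 else 0) =
      ∑ p ∈ B, ∑ e ∈ fano p, w e := by
    simp only [Finset.mul_sum]
    rw [Finset.sum_comm]
    refine Finset.sum_congr rfl fun p _ => ?_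
    simp
  have e6 : M.card ≤ ∑ m ∈ M, w m := by
    rw [Finset.card_eq_sum_ones]
    exact Finset.sum_le_sum fun m hm => Nat.pos_of_ne_zero (hc.edge m hm)
  have split : ∀ a b c d : (Fin 3 → V) → ℕ, ∑ e, w e * (a e + b e + c e + d e) =
      ∑ e, w e * a e + ∑ e, w e * b e + ∑ e, w e * c e + ∑ e, w e * d e := fun a b c d => by
    simp only [mul_add, Finset.sum_add_distrib]
  rw [e1, split, e2, e4, e5] at key
  linarith

/-- A Fano plane carrying `2 * r` edges is a connected component, with all multiplicities equal
to `r / 2`. -/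
lemma fano_component {p : (Fin 3 → V) × (Fin 3 → V)} (hp : Disj p.1 p.2) (hr : Reg w r)
    (hN : 2 * r ≤ ∑ e ∈ fano p, w e) :
    (∀ e, e ∉ fano p → ∀ i, On p i (e i) → w e = 0) ∧
      ∃ s, 2 * s = r ∧ ∀ e ∈ fano p, w e = s := by
  have hz : ∀ e, e ∉ fano p → ∀ i, On p i (e i) → w e = 0 := by
    intro e he i hi
    have h1 : ∑ e, w e * ((if e i = p.1 i then 1 else 0) + (if e i = p.2 i then 1 else 0)) =
        2 * r := by
      simp only [mul_add, Finset.sum_add_distrib, hr _ _]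
      ring
    have hone : ∀ f : Fin 3 → V, On p i (f i) →
        1 ≤ (if f i = p.1 i then 1 else 0) + (if f i = p.2 i then 1 else 0) := by
      rintro f (h | h) <;> simp [h]
    have h2 : ∑ f ∈ insert e (fano p), w f ≤ ∑ e, w e *
        ((if e i = p.1 i then 1 else 0) + (if e i = p.2 i then 1 else 0)) := by
      refine le_trans (Finset.sum_le_sum fun f hf => ?_)
        (Finset.sum_le_sum_of_subset (Finset.subset_univ (insert e (fano p))))
      refine Nat.le_mul_of_pos_right _ (hone f ?_)
      rcases Finset.mem_insert.1 hf with rfl | hf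
      · exact hi
      · exact on_of_mem_fano hf i
    rw [Finset.sum_insert he] at h2
    omega
  have hdeg : ∀ i v, On p i v → ∑ e ∈ fano p, w e * (if e i = v then 1 else 0) = r := by
    intro i v hv
    rw [← hr i v]
    refine Finset.sum_subset (Finset.subset_univ _) fun e _ he => ?_
    split_ifs with h
    · rw [hz e he i (h ▸ hv), zero_mul]
    · simp
  refine ⟨hz, w p.1, ?_⟩
  have h0 := hp 0
  have h1 := hp 1
  have h2 := hp 2
  have hsum : ∀ f : (Fin 3 → V) → ℕ, ∑ e ∈ fano p, f e = f p.1 + f ![p.1 0, p.2 1, p.2 2] +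
      f ![p.2 0, p.1 1, p.2 2] + f ![p.2 0, p.2 1, p.1 2] := by
    intro f
    rw [fano, Finset.sum_insert, Finset.sum_insert, Finset.sum_insert, Finset.sum_singleton]
    · ring
    all_goals
      simp only [Finset.mem_insert, Finset.mem_singleton, not_or, funext_iff, Fin.forall_fin_succ]
      simp [h0, h1, h2, h1.symm, h2.symm]
  have d0 := hdeg 0 (p.1 0) (Or.inl rfl)
  have d1 := hdeg 1 (p.1 1) (Or.inl rfl)
  have d2 := hdeg 2 (p.1 2) (Or.inl rfl)
  have d3 := hdeg 2 (p.2 2) (Or.inr rfl)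
  rw [hsum] at d0 d1 d2 d3
  simp [h2, h0.symm, h1.symm, h2.symm] at d0 d1 d2 d3
  refine ⟨by omega, ?_⟩
  simp only [fano, Finset.forall_mem_insert, Finset.mem_singleton, forall_eq, true_and]
  omega

/-- Stability for the hypergraph with edge multiplicities `w`. -/
lemma exists_components (hν : MatchBound w ν) (hr : Reg w r)
    (hM : ∃ M : Finset (Fin 3 → V), (∀ e ∈ M, w e ≠ 0) ∧
      (∀ e ∈ M, ∀ f ∈ M, e ≠ f → Disj e f) ∧ M.card = ν) :
    ∃ T : Finset ((Fin 3 → V) × (Fin 3 → V)),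
      (∀ p ∈ T, Disj p.1 p.2 ∧ (∀ e, e ∉ fano p → ∀ i, On p i (e i) → w e = 0) ∧
        ∃ s, 2 * s = r ∧ ∀ e ∈ fano p, w e = s) ∧
      (∀ p ∈ T, ∀ q ∈ T, ∀ i v, On p i v → On q i v → p = q) ∧
      4 * (Fintype.card V * r) + ν ≤ 8 * r * ν + T.card := by
  classical
  obtain ⟨M₀, h1, h2, h3⟩ := hM
  obtain ⟨⟨M, B⟩, hmem, hmax⟩ := Finset.exists_max_image
    (Finset.univ.filter fun x : Finset (Fin 3 → V) × Finset ((Fin 3 → V) × (Fin 3 → V)) =>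
      Config w x.1 x.2 ∧ x.1.card + x.2.card = ν) (fun x => x.2.card)
    ⟨(M₀, ∅), by
      simp only [Finset.mem_filter, Finset.mem_univ, true_and, Finset.card_empty, add_zero, h3,
        and_true]
      exact ⟨h1, h2, by simp, by simp, by simp, by simp⟩⟩
  obtain ⟨hc, hcard⟩ := (Finset.mem_filter.1 hmem).2
  have count := hc.main_count hν hr hcard fun M' B' h h' => hmax (M', B') (by simp [h, h'])
  simp only at hc hcard
  refine ⟨B.filter fun p => 2 * r ≤ ∑ e ∈ fano p, w e, fun p hp => ?_, fun p hp q hq => ?_, ?_⟩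
  · obtain ⟨hpB, hN⟩ := Finset.mem_filter.1 hp
    exact ⟨hc.ne p hpB, fano_component (hc.ne p hpB) hr hN⟩
  · exact hc.sepB p (Finset.mem_filter.1 hp).1 q (Finset.mem_filter.1 hq).1
  · have hle : ∀ p ∈ B, ∑ e ∈ fano p, w e + 1 ≤
        2 * r + if 2 * r ≤ ∑ e ∈ fano p, w e then 1 else 0 := by
      intro p hp
      have : ∑ e ∈ fano p, w e ≤ 2 * r := by
        calc ∑ e ∈ fano p, w e ≤ ∑ e ∈ fano p,
              (w e * (if e 0 = p.1 0 then 1 else 0) + w e * (if e 0 = p.2 0 then 1 else 0)) := by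
              refine Finset.sum_le_sum fun e he => ?_
              rcases on_of_mem_fano he 0 with h | h <;> simp [h]
          _ ≤ ∑ e, (w e * (if e 0 = p.1 0 then 1 else 0) +
              w e * (if e 0 = p.2 0 then 1 else 0)) :=
              Finset.sum_le_sum_of_subset (Finset.subset_univ _)
          _ = 2 * r := by rw [Finset.sum_add_distrib, hr, hr, two_mul]
      split_ifs <;> omega
    have hsum := Finset.sum_le_sum hle
    rw [Finset.sum_add_distrib, Finset.sum_add_distrib, ← Finset.card_filter] at hsum
    simp only [Finset.sum_const, smul_eq_mul, mul_one] at hsum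
    rw [← hcard]
    nlinarith

end
section
variable {α β γ : Type*}

/-- Triples as functions on `Fin 3`, after numbering the three vertex classes. -/
def tripleEquiv {n : ℕ} (ea : α ≃ Fin n) (eb : β ≃ Fin n) (ec : γ ≃ Fin n) :
    α × β × γ ≃ (Fin 3 → Fin n) where
  toFun t := ![ea t.1, eb t.2.1, ec t.2.2]
  invFun e := (ea.symm (e 0), eb.symm (e 1), ec.symm (e 2))
  left_inv t := by simp
  right_inv e := by funext i; fin_cases i <;> simp

lemma sum_count_mul_ite {ι : Type*} [Fintype ι] [DecidableEq ι] (H : Multiset ι) (P : ι → Prop)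
    [DecidablePred P] : ∑ t, H.count t * (if P t then 1 else 0) = (H.filter P).card := by
  rw [← Multiset.sum_count_eq_card (s := Finset.univ) (m := H.filter P) (by simp)]
  refine Finset.sum_congr rfl fun t _ => ?_
  rw [Multiset.count_filter]
  split_ifs <;> simp

lemma IsMatching.map_disj {n : ℕ} {ea : α ≃ Fin n} {eb : β ≃ Fin n} {ec : γ ≃ Fin n}
    {H : Multiset (α × β × γ)} {M : Finset (α × β × γ)} (hM : IsMatching H M) {e f : Fin 3 → Fin n}
    (he : e ∈ M.map (tripleEquiv ea eb ec).toEmbedding)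
    (hf : f ∈ M.map (tripleEquiv ea eb ec).toEmbedding) (hef : e ≠ f) : Disj e f := by
  obtain ⟨t, ht, rfl⟩ := Finset.mem_map.1 he
  obtain ⟨u, hu, rfl⟩ := Finset.mem_map.1 hf
  obtain ⟨h1, h2, h3⟩ := hM.2 t ht u hu (fun h => hef (h ▸ rfl))
  intro i
  fin_cases i <;> simpa [tripleEquiv]

lemma isMatching_map_symm {n : ℕ} {ea : α ≃ Fin n} {eb : β ≃ Fin n} {ec : γ ≃ Fin n}
    {H : Multiset (α × β × γ)} {M : Finset (Fin 3 → Fin n)}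
    (hM : ∀ e ∈ M, (tripleEquiv ea eb ec).symm e ∈ H)
    (hd : ∀ e ∈ M, ∀ f ∈ M, e ≠ f → Disj e f) :
    IsMatching H (M.map (tripleEquiv ea eb ec).symm.toEmbedding) := by
  refine ⟨fun t ht => ?_, fun t ht u hu htu => ?_⟩
  · obtain ⟨e, he, rfl⟩ := Finset.mem_map.1 ht
    exact hM e he
  · obtain ⟨e, he, rfl⟩ := Finset.mem_map.1 ht
    obtain ⟨f, hf, rfl⟩ := Finset.mem_map.1 hu
    have h := hd e he f hf (fun h => htu (h ▸ rfl))
    exact ⟨by simpa [tripleEquiv] using h 0, by simpa [tripleEquiv] using h 1,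
      by simpa [tripleEquiv] using h 2⟩

lemma bddAbove_matching [Finite α] [Finite β] [Finite γ] (H : Multiset (α × β × γ)) :
    BddAbove {k | ∃ M : Finset (α × β × γ), IsMatching H M ∧ M.card = k} := by
  have := Fintype.ofFinite (α × β × γ)
  refine ⟨Fintype.card (α × β × γ), ?_⟩
  rintro k ⟨M, -, rfl⟩
  exact M.card_le_univ

variable [DecidableEq α] [DecidableEq β] [DecidableEq γ]

lemma isFanoComponent_of_fano {n s : ℕ} {ea : α ≃ Fin n} {eb : β ≃ Fin n} {ec : γ ≃ Fin n}
    {H : Multiset (α × β × γ)} {p : (Fin 3 → Fin n) × (Fin 3 → Fin n)} (hp : Disj p.1 p.2)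
    (hz : ∀ e, e ∉ fano p → ∀ i, On p i (e i) → H.count ((tripleEquiv ea eb ec).symm e) = 0)
    (hs : ∀ e ∈ fano p, H.count ((tripleEquiv ea eb ec).symm e) = s) :
    IsFanoComponent H s (ea.symm (p.1 0)) (ea.symm (p.2 0)) (eb.symm (p.1 1)) (eb.symm (p.2 1))
      (ec.symm (p.1 2)) (ec.symm (p.2 2)) := by
  have h0 := hp 0
  have h1 := hp 1
  have h2 := hp 2
  refine ⟨by simpa, by simpa, by simpa, ?_⟩
  have hnd : (fanoEdges (ea.symm (p.1 0)) (ea.symm (p.2 0)) (eb.symm (p.1 1)) (eb.symm (p.2 1))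
      (ec.symm (p.1 2)) (ec.symm (p.2 2))).Nodup := by
    simp [fanoEdges, h0, h1, h2, h1.symm, h2.symm]
  ext t
  obtain ⟨e, rfl⟩ := (tripleEquiv ea eb ec).symm.surjective t
  have hmem : (tripleEquiv ea eb ec).symm e ∈ fanoEdges (ea.symm (p.1 0)) (ea.symm (p.2 0))
      (eb.symm (p.1 1)) (eb.symm (p.2 1)) (ec.symm (p.1 2)) (ec.symm (p.2 2)) ↔ e ∈ fano p := by
    simp only [fano, Finset.mem_insert, Finset.mem_singleton, funext_iff, Fin.forall_fin_succ]
    simp [fanoEdges, tripleEquiv]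
  rw [Multiset.count_filter, Multiset.count_nsmul, Multiset.count_eq_of_nodup hnd]
  simp only [hmem]
  by_cases he : e ∈ fano p
  · rw [if_pos, hs e he, if_pos he]
    · simp
    · rcases on_of_mem_fano he 0 with h | h <;> simp [tripleEquiv, h]
  · rw [if_neg he, mul_zero]
    split_ifs with h
    · simp only [tripleEquiv, Equiv.coe_fn_symm_mk, EmbeddingLike.apply_eq_iff_eq] at h
      rcases h with h | h | h | h | h | h
      · exact hz e he 0 (Or.inl h)
      · exact hz e he 0 (Or.inr h)
      · exact hz e he 1 (Or.inl h)
      · exact hz e he 1 (Or.inr h)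
      · exact hz e he 2 (Or.inl h)
      · exact hz e he 2 (Or.inr h)
    · rfl

lemma IsRegular.reg [Fintype α] [Fintype β] [Fintype γ] {n r : ℕ} {H : Multiset (α × β × γ)}
    (hreg : IsRegular H r) (ea : α ≃ Fin n) (eb : β ≃ Fin n) (ec : γ ≃ Fin n) :
    Reg (fun e => H.count ((tripleEquiv ea eb ec).symm e)) r := by
  obtain ⟨h1, h2, h3⟩ := hreg
  intro i v
  rw [← Equiv.sum_comp (tripleEquiv ea eb ec)]
  simp only [Equiv.symm_apply_apply]
  rw [sum_count_mul_ite]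
  fin_cases i
  · rw [← h1 (ea.symm v), deg1]
    exact congrArg _ (Multiset.filter_congr fun t _ => by simp [tripleEquiv, Equiv.eq_symm_apply])
  · rw [← h2 (eb.symm v), deg2]
    exact congrArg _ (Multiset.filter_congr fun t _ => by simp [tripleEquiv, Equiv.eq_symm_apply])
  · rw [← h3 (ec.symm v), deg3]
    exact congrArg _ (Multiset.filter_congr fun t _ => by simp [tripleEquiv, Equiv.eq_symm_apply])

end

/-- Weaker stability theorem for regular 3-partite 3-graphs: if `H` is `r`-regular
(`r ≥ 2`) with `n` vertices in each class and `ν(H) ≤ (1 + ε)·n/2`, then `H` has at least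
`(1 − (30r − 35)ε)·n/2` connected components that are copies of `(r/2) • F`. -/
theorem stmt14 {α β γ : Type*} [Fintype α] [Fintype β] [Fintype γ]
    [DecidableEq α] [DecidableEq β] [DecidableEq γ]
    (H : Multiset (α × β × γ)) (n r : ℕ) (hr : 2 ≤ r) (ε : ℝ) (hε : 0 ≤ ε)
    (hreg : IsRegular H r)
    (hA : Fintype.card α = n) (hB : Fintype.card β = n) (hC : Fintype.card γ = n)
    (hnu : (matchNum H : ℝ) ≤ (1 + ε) * n / 2) :
    ∃ T : Finset (α × α × β × β × γ × γ),
      (∀ t ∈ T, ∃ s : ℕ, 2 * s = r ∧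
        IsFanoComponent H s t.1 t.2.1 t.2.2.1 t.2.2.2.1 t.2.2.2.2.1 t.2.2.2.2.2) ∧
      (∀ t ∈ T, ∀ t' ∈ T, t ≠ t' →
        ({t.1, t.2.1} : Finset α) ∩ {t'.1, t'.2.1} = ∅ ∧
        ({t.2.2.1, t.2.2.2.1} : Finset β) ∩ {t'.2.2.1, t'.2.2.2.1} = ∅ ∧
        ({t.2.2.2.2.1, t.2.2.2.2.2} : Finset γ) ∩ {t'.2.2.2.2.1, t'.2.2.2.2.2} = ∅) ∧
      (1 - (30 * (r : ℝ) - 35) * ε) * n / 2 ≤ (T.card : ℝ) := by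
  obtain ea := Fintype.equivFinOfCardEq hA
  obtain eb := Fintype.equivFinOfCardEq hB
  obtain ec := Fintype.equivFinOfCardEq hC
  obtain ⟨M, hM, hMcard⟩ := Nat.sSup_mem (s := {k | ∃ M, IsMatching H M ∧ M.card = k})
    ⟨0, ∅, by simp [IsMatching], rfl⟩ (bddAbove_matching H)
  obtain ⟨T, hT, hTT, hcount⟩ := exists_components
    (w := fun e => H.count ((tripleEquiv ea eb ec).symm e)) (ν := matchNum H)
    (fun M' h1 h2 => by
      refine le_csSup (bddAbove_matching H) ⟨_, isMatching_map_symm (ea := ea) (eb := eb)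
        (ec := ec) (M := M') (fun e he => Multiset.count_ne_zero.1 (h1 e he)) h2, ?_⟩
      rw [Finset.card_map])
    (hreg.reg ea eb ec)
    ⟨M.map (tripleEquiv ea eb ec).toEmbedding, fun e he => by
      obtain ⟨t, ht, rfl⟩ := Finset.mem_map.1 he
      simpa using hM.1 t ht, fun e he f hf => hM.map_disj he hf,
      by rw [Finset.card_map, hMcard, matchNum]⟩
  let ψ : (Fin 3 → Fin n) × (Fin 3 → Fin n) → α × α × β × β × γ × γ := fun p =>
    (ea.symm (p.1 0), ea.symm (p.2 0), eb.symm (p.1 1), eb.symm (p.2 1), ec.symm (p.1 2),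
      ec.symm (p.2 2))
  have hinj : Set.InjOn ψ T := fun p hp q hq h => by
    refine hTT p hp q hq 0 (p.1 0) (Or.inl rfl) (Or.inl ?_)
    exact ea.symm.injective (congrArg Prod.fst h)
  refine ⟨T.image ψ, fun t ht => ?_, fun t ht t' ht' htt => ?_, ?_⟩
  · obtain ⟨p, hp, rfl⟩ := Finset.mem_image.1 ht
    obtain ⟨hd, hz, s, hs, hw⟩ := hT p hp
    exact ⟨s, hs, isFanoComponent_of_fano hd hz hw⟩
  · obtain ⟨p, hp, rfl⟩ := Finset.mem_image.1 ht
    obtain ⟨q, hq, rfl⟩ := Finset.mem_image.1 ht'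
    have hpq : p ≠ q := fun h => htt (h ▸ rfl)
    have key := fun i v h h' => hpq (hTT p hp q hq i v h h')
    simp only [← Finset.disjoint_iff_inter_eq_empty, Finset.disjoint_left, Finset.mem_insert,
      Finset.mem_singleton, ψ, ← Equiv.symm_apply_eq, Equiv.symm_symm]
    exact ⟨fun a => key 0 (ea a), fun b => key 1 (eb b), fun c => key 2 (ec c)⟩
  · rw [Finset.card_image_of_injOn hinj]
    rw [Fintype.card_fin] at hcount
    have hcount' : 4 * ((n : ℝ) * r) + matchNum H ≤ 8 * r * matchNum H + T.card := by
      exact_mod_cast hcount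
    have hr' : (2 : ℝ) ≤ r := by exact_mod_cast hr
    have hn : (0 : ℝ) ≤ ε * n := mul_nonneg hε n.cast_nonneg
    have h1 := mul_le_mul_of_nonneg_left hnu (show (0 : ℝ) ≤ 8 * r - 1 by linarith)
    have h2 := mul_nonneg hn (show (0 : ℝ) ≤ 22 * r - 34 by linarith)
    nlinarith

end Tripartite
end
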